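/- arXiv:2603.27478 — 2 statements merged into one kernel-verified Lean document; each statement's English description precedes it below -/
import Mathlib

section
/- Let U : ℝ → ℝ be convex, let N ≥ 1, let ω_1, …, ω_N ≥ 0 with Σ_{q=1}^N ω_q = 1, let u_1, …, u_N ∈ ℝ, and let ū = Σ_{q=1}^N ω_q u_q. Set U¹ˢᵗ = U(ū) and Uʰⁱᵍʰ = Σ_{q=1}^N ω_q U(u_q), and let Uᵘᵖ ∈ ℝ satisfy U¹ˢᵗ ≤ Uᵘᵖ. Assume U¹ˢᵗ < Uʰⁱᵍʰ and define θ = min{(Uᵘᵖ − U¹ˢᵗ)/(Uʰⁱᵍʰ − U¹ˢᵗ), 1}. Then 0 ≤ θ ≤ 1 and Σ_{q=1}^N ω_q U(ū + θ(u_q − ū)) ≤ Uᵘᵖ. -/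
/-!
Scaling towards `a` by `θ ∈ [0, 1]` replaces `u i` by the convex combination `(1 - θ) a + θ u i`, so
by convexity the new mean entropy is at most `(1 - θ) U a + θ H`, where `H` is the old one. If
`U a < H`, this bound increases with `θ`, and the limiter takes the largest `θ ≤ 1` for which it
does not exceed the prescribed one.
-/

open AffineMap

section Convexity

variable {R E β ι : Type*} [CommRing R] [AddCommGroup β] [Module R β]

theorem sum_smul_lineMap {t : Finset ι} {w : ι → R} (hw : ∑ i ∈ t, w i = 1)
    (b : β) (f : ι → β) (θ : R) :
    ∑ i ∈ t, w i • lineMap b (f i) θ = lineMap b (∑ i ∈ t, w i • f i) θ := by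
  simp only [lineMap_apply_module, smul_add, Finset.sum_add_distrib, ← Finset.sum_smul, hw,
    one_smul, smul_comm _ θ, ← Finset.smul_sum]

variable [PartialOrder R] [IsOrderedAddMonoid R] [AddCommGroup E] [Module R E]
  [PartialOrder β] {s : Set E} {f : E → β} {x y : E} {θ : R}

theorem map_lineMap_le_of_convexOn (hf : ConvexOn R s f) (hx : x ∈ s) (hy : y ∈ s)
    (hθ₀ : 0 ≤ θ) (hθ₁ : θ ≤ 1) : f (lineMap x y θ) ≤ lineMap (f x) (f y) θ := by
  simpa only [lineMap_apply_module] using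
    hf.2 hx hy (sub_nonneg.mpr hθ₁) hθ₀ (sub_add_cancel 1 θ)

theorem sum_smul_map_lineMap_le_of_convexOn [IsOrderedAddMonoid β] [PosSMulMono R β]
    {t : Finset ι} {w : ι → R} {u : ι → E} (hf : ConvexOn R s f)
    (hw₀ : ∀ i ∈ t, 0 ≤ w i) (hw₁ : ∑ i ∈ t, w i = 1) (hx : x ∈ s) (hu : ∀ i ∈ t, u i ∈ s)
    (hθ₀ : 0 ≤ θ) (hθ₁ : θ ≤ 1) :
    ∑ i ∈ t, w i • f (lineMap x (u i) θ) ≤ lineMap (f x) (∑ i ∈ t, w i • f (u i)) θ :=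
  calc ∑ i ∈ t, w i • f (lineMap x (u i) θ)
      ≤ ∑ i ∈ t, w i • lineMap (f x) (f (u i)) θ :=
        Finset.sum_le_sum fun i hi ↦ smul_le_smul_of_nonneg_left
          (map_lineMap_le_of_convexOn hf hx (hu i hi) hθ₀ hθ₁) (hw₀ i hi)
    _ = lineMap (f x) (∑ i ∈ t, w i • f (u i)) θ := sum_smul_lineMap hw₁ _ _ θ

end Convexity

section LimiterCoeff

variable {𝕜 : Type*} [Field 𝕜] [LinearOrder 𝕜] {low high up : 𝕜}

/-- The scaling coefficient `θ` of the Zhang–Shu-type limiter, where `low`, `high` and `up` are the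
entropy of the reference state, the mean entropy of the unlimited values and the prescribed bound.
It is meaningful only when `low < high`: at `low = high` the division by zero makes it `0`. -/
def limiterCoeff (low high up : 𝕜) : 𝕜 := min ((up - low) / (high - low)) 1

theorem limiterCoeff_le_one : limiterCoeff low high up ≤ 1 := min_le_right _ _

variable [IsStrictOrderedRing 𝕜]

theorem limiterCoeff_nonneg (hhigh : low ≤ high) (hup : low ≤ up) :
    0 ≤ limiterCoeff low high up :=
  le_min (div_nonneg (sub_nonneg.mpr hup) (sub_nonneg.mpr hhigh)) zero_le_one

theorem lineMap_limiterCoeff_le (h : low < high) :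
    lineMap low high (limiterCoeff low high up) ≤ up := by
  rw [lineMap_apply_ring', ← le_sub_iff_add_le, ← le_div_iff₀ (sub_pos.mpr h)]
  exact min_le_left _ _

end LimiterCoeff

theorem ES_limiter_enforces_entropy_bound_general {𝕜 E ι : Type*} [Field 𝕜] [LinearOrder 𝕜]
    [IsStrictOrderedRing 𝕜] [AddCommGroup E] [Module 𝕜 E] {s : Set E} {U : E → 𝕜}
    (hU : ConvexOn 𝕜 s U) {t : Finset ι} {ω : ι → 𝕜} (hω : ∀ i ∈ t, 0 ≤ ω i)
    (hωsum : ∑ i ∈ t, ω i = 1) {u : ι → E} (hu : ∀ i ∈ t, u i ∈ s) {a : E} (ha : a ∈ s)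
    {Uup : 𝕜} (hUup : U a ≤ Uup) (hlt : U a < ∑ i ∈ t, ω i * U (u i))
    {θ : 𝕜} (hθ : θ = limiterCoeff (U a) (∑ i ∈ t, ω i * U (u i)) Uup) :
    0 ≤ θ ∧ θ ≤ 1 ∧ ∑ i ∈ t, ω i * U (a + θ • (u i - a)) ≤ Uup := by
  have hθ₀ : 0 ≤ θ := hθ ▸ limiterCoeff_nonneg hlt.le hUup
  have hθ₁ : θ ≤ 1 := hθ ▸ limiterCoeff_le_one
  refine ⟨hθ₀, hθ₁, ?_⟩
  calc ∑ i ∈ t, ω i * U (a + θ • (u i - a))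
      = ∑ i ∈ t, ω i • U (lineMap a (u i) θ) := by
        simp only [lineMap_apply_module', add_comm a, smul_eq_mul]
    _ ≤ lineMap (U a) (∑ i ∈ t, ω i * U (u i)) θ :=
        sum_smul_map_lineMap_le_of_convexOn hU hω hωsum ha hu hθ₀ hθ₁
    _ ≤ Uup := hθ ▸ lineMap_limiterCoeff_le hlt

/-- Theorem 3.7: the Zhang–Shu-type entropy-stable limiter with the explicit
scaling coefficient θ enforces the prescribed entropy bound. -/
theorem ES_limiter_enforces_entropy_bound
    (U : ℝ → ℝ) (hU : ConvexOn ℝ Set.univ U)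
    (N : ℕ) (hN : 1 ≤ N)
    (ω : Fin N → ℝ) (hω : ∀ q, 0 ≤ ω q) (hωsum : ∑ q, ω q = 1)
    (u : Fin N → ℝ) (ubar : ℝ) (hubar : ubar = ∑ q, ω q * u q)
    (U1st Uhigh Uup : ℝ)
    (hU1st : U1st = U ubar) (hUhigh : Uhigh = ∑ q, ω q * U (u q))
    (hUup : U1st ≤ Uup) (hlt : U1st < Uhigh)
    (θ : ℝ) (hθ : θ = min ((Uup - U1st) / (Uhigh - U1st)) 1) :
    0 ≤ θ ∧ θ ≤ 1 ∧ ∑ q, ω q * U (ubar + θ * (u q - ubar)) ≤ Uup := by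
  subst hU1st hUhigh
  exact ES_limiter_enforces_entropy_bound_general hU (fun q _ ↦ hω q) hωsum
    (fun _ _ ↦ Set.mem_univ _) (Set.mem_univ ubar) hUup hlt hθ
end

section
/- Let p ≥ 1, let U : ℝ^p → ℝ be convex, let N ≥ 2, and let ω_1, …, ω_N > 0 with Σ_{q=1}^N ω_q = 1. Let u_L, u_1, …, u_N, u_R ∈ ℝ^p, let ū = Σ_{q=1}^N ω_q u_q, and let λ > 0. Let f̂ : ℝ^p × ℝ^p → ℝ^p and F̂ : ℝ^p × ℝ^p → ℝ, write f_mid = f̂(u_1, u_N), f_+ = f̂(u_N, u_R), f_− = f̂(u_L, u_1), F_mid = F̂(u_1, u_N), F_+ = F̂(u_N, u_R), F_− = F̂(u_L, u_1), and define the substeps H_N = u_N − (λ/ω_N)(f_+ − f_mid) and H_1 = u_1 − (λ/ω_1)(f_mid − f_−). If U(H_N) ≤ U(u_N) − (λ/ω_N)(F_+ − F_mid) and U(H_1) ≤ U(u_1) − (λ/ω_1)(F_mid − F_−), then the updated cell average ū⁺ = ū − λ(f_+ − f_−) satisfies U(ū⁺) ≤ Σ_{q=1}^N ω_q U(u_q)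 − λ(F_+ − F_−). -/
/-!
The updated cell average `ū - λ (f₊ - f₋)` is the average, with the same quadrature weights, of
nodal values in which only the two endpoint nodes have been changed: adding and subtracting the
artificial flux `f_mid` splits `λ (f₊ - f₋)` into one first-order finite volume substep at each
endpoint, with local ratio `λ / ω q`. Jensen's inequality moves `U` inside the average, the cell
entropy inequalities bound the two modified terms, and the entropy fluxes telescope in the same way.
-/

section FluxDifference

variable {ι G : Type*} [DecidableEq ι] [AddCommGroup G]

/-- The flux differences at the quadrature nodes of a cell with left and right endpoint nodes `a`
and `b`: the endpoints are treated as two finite volume cells sharing the interface flux `m`, with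
outer fluxes `l` and `r`, and the interior nodes have flux difference `0`. It serves both for the
numerical flux and for the numerical entropy flux. -/
def endpointFluxDiff (a b : ι) (l m r : G) : ι → G :=
  Pi.single a (m - l) + Pi.single b (r - m)

variable {a b : ι} {l m r : G}

theorem endpointFluxDiff_left (hab : a ≠ b) : endpointFluxDiff a b l m r a = m - l := by
  simp [endpointFluxDiff, hab]

theorem endpointFluxDiff_right (hab : a ≠ b) : endpointFluxDiff a b l m r b = r - m := by
  simp [endpointFluxDiff, hab.symm]

theorem endpointFluxDiff_of_ne {q : ι} (ha : q ≠ a) (hb : q ≠ b) :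
    endpointFluxDiff a b l m r q = 0 := by
  simp [endpointFluxDiff, ha, hb]

theorem sum_endpointFluxDiff [Fintype ι] (a b : ι) (l m r : G) :
    ∑ q, endpointFluxDiff a b l m r q = r - l := by
  simp [endpointFluxDiff, Finset.sum_add_distrib]

end FluxDifference

theorem sum_smul_sub_div_smul {𝕜 E ι : Type*} [Field 𝕜] [AddCommGroup E] [Module 𝕜 E]
    {t : Finset ι} {w : ι → 𝕜} (hw : ∀ i ∈ t, w i ≠ 0) (c : 𝕜) (x d : ι → E) :
    ∑ i ∈ t, w i • (x i - (c / w i) • d i) = ∑ i ∈ t, w i • x i - c • ∑ i ∈ t, d i := by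
  rw [Finset.smul_sum, ← Finset.sum_sub_distrib]
  refine Finset.sum_congr rfl fun i hi => ?_
  rw [smul_sub, smul_smul, mul_div_cancel₀ c (hw i hi)]

section Entropy

variable {𝕜 E β ι : Type*} [Field 𝕜] [LinearOrder 𝕜] [IsStrictOrderedRing 𝕜]
  [AddCommGroup E] [Module 𝕜 E]
  [AddCommGroup β] [PartialOrder β] [IsOrderedAddMonoid β] [Module 𝕜 β] [IsStrictOrderedModule 𝕜 β]
  {s : Set E} {U : E → β} {c : 𝕜}

theorem map_sum_smul_sub_smul_sum_le_of_substeps (hU : ConvexOn 𝕜 s U) {t : Finset ι} {w : ι → 𝕜}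
    (hw : ∀ i ∈ t, 0 < w i) (hwsum : ∑ i ∈ t, w i = 1) {x d : ι → E} {D : ι → β}
    (hmem : ∀ i ∈ t, x i - (c / w i) • d i ∈ s)
    (hentropy : ∀ i ∈ t, U (x i - (c / w i) • d i) ≤ U (x i) - (c / w i) • D i) :
    U (∑ i ∈ t, w i • x i - c • ∑ i ∈ t, d i)
      ≤ ∑ i ∈ t, w i • U (x i) - c • ∑ i ∈ t, D i := by
  have hw_ne : ∀ i ∈ t, w i ≠ 0 := fun i hi => (hw i hi).ne'
  calc U (∑ i ∈ t, w i • x i - c • ∑ i ∈ t, d i)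
      = U (∑ i ∈ t, w i • (x i - (c / w i) • d i)) := by rw [sum_smul_sub_div_smul hw_ne]
    _ ≤ ∑ i ∈ t, w i • U (x i - (c / w i) • d i) :=
        hU.map_sum_le (fun i hi => (hw i hi).le) hwsum hmem
    _ ≤ ∑ i ∈ t, w i • (U (x i) - (c / w i) • D i) :=
        Finset.sum_le_sum fun i hi => smul_le_smul_of_nonneg_left (hentropy i hi) (hw i hi).le
    _ = ∑ i ∈ t, w i • U (x i) - c • ∑ i ∈ t, D i := sum_smul_sub_div_smul hw_ne c _ D

theorem forwardEuler_DG_ES_like_systems_general [Fintype ι] (hU : ConvexOn 𝕜 s U)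
    {ω : ι → 𝕜} (hω : ∀ q, 0 < ω q) (hωsum : ∑ q, ω q = 1)
    {u : ι → E} {a b : ι} (hab : a ≠ b) (hu : ∀ q, q ≠ a → q ≠ b → u q ∈ s)
    {fminus fmid fplus : E} {Fminus Fmid Fplus : β}
    (hmem_a : u a - (c / ω a) • (fmid - fminus) ∈ s)
    (hmem_b : u b - (c / ω b) • (fplus - fmid) ∈ s)
    (hES_a : U (u a - (c / ω a) • (fmid - fminus)) ≤ U (u a) - (c / ω a) • (Fmid - Fminus))
    (hES_b : U (u b - (c / ω b) • (fplus - fmid)) ≤ U (u b) - (c / ω b) • (Fplus - Fmid)) :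
    U (∑ q, ω q • u q - c • (fplus - fminus))
      ≤ ∑ q, ω q • U (u q) - c • (Fplus - Fminus) := by
  classical
  let d := endpointFluxDiff a b fminus fmid fplus
  let D := endpointFluxDiff a b Fminus Fmid Fplus
  have hsubstep (q : ι) : u q - (c / ω q) • d q ∈ s ∧
      U (u q - (c / ω q) • d q) ≤ U (u q) - (c / ω q) • D q := by
    obtain rfl | ha := eq_or_ne q a
    · simpa only [d, D, endpointFluxDiff_left hab] using ⟨hmem_a, hES_a⟩
    obtain rfl | hb := eq_or_ne q b
    · simpa only [d, D, endpointFluxDiff_right hab] using ⟨hmem_b, hES_b⟩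
    · simpa [d, D, endpointFluxDiff_of_ne ha hb] using hu q ha hb
  simpa only [d, D, sum_endpointFluxDiff] using
    map_sum_smul_sub_smul_sum_le_of_substeps hU (fun q _ => hω q) hωsum
      (fun q _ => (hsubstep q).1) (fun q _ => (hsubstep q).2)

end Entropy

/-- The ES-like property (Theorem 4.3) of the DG scheme with forward Euler
time stepping for one-dimensional systems of conservation laws. -/
theorem forwardEuler_DG_ES_like_systems
    (p : ℕ) (hp : 1 ≤ p)
    (U : (Fin p → ℝ) → ℝ) (hU : ConvexOn ℝ Set.univ U)
    (N : ℕ) (hN : 2 ≤ N)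
    (ω : Fin N → ℝ) (hω : ∀ q, 0 < ω q) (hωsum : ∑ q, ω q = 1)
    (uL uR : Fin p → ℝ) (u : Fin N → (Fin p → ℝ))
    (ubar : Fin p → ℝ) (hubar : ubar = ∑ q, ω q • u q)
    (lam : ℝ) (hlam : 0 < lam)
    (fhat : (Fin p → ℝ) → (Fin p → ℝ) → (Fin p → ℝ))
    (Fhat : (Fin p → ℝ) → (Fin p → ℝ) → ℝ)
    (fmid fplus fminus : Fin p → ℝ) (Fmid Fplus Fminus : ℝ)
    (HN H1 : Fin p → ℝ)
    (hfmid : fmid = fhat (u ⟨0, by omega⟩) (u ⟨N - 1, by omega⟩))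
    (hfplus : fplus = fhat (u ⟨N - 1, by omega⟩) uR)
    (hfminus : fminus = fhat uL (u ⟨0, by omega⟩))
    (hFmid : Fmid = Fhat (u ⟨0, by omega⟩) (u ⟨N - 1, by omega⟩))
    (hFplus : Fplus = Fhat (u ⟨N - 1, by omega⟩) uR)
    (hFminus : Fminus = Fhat uL (u ⟨0, by omega⟩))
    (hHN : HN = u ⟨N - 1, by omega⟩ - (lam / ω ⟨N - 1, by omega⟩) • (fplus - fmid))
    (hH1 : H1 = u ⟨0, by omega⟩ - (lam / ω ⟨0, by omega⟩) • (fmid - fminus))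
    (hESN : U HN ≤ U (u ⟨N - 1, by omega⟩) - (lam / ω ⟨N - 1, by omega⟩) * (Fplus - Fmid))
    (hES1 : U H1 ≤ U (u ⟨0, by omega⟩) - (lam / ω ⟨0, by omega⟩) * (Fmid - Fminus)) :
    U (ubar - lam • (fplus - fminus)) ≤ (∑ q, ω q * U (u q)) - lam * (Fplus - Fminus) := by
  subst hubar hHN hH1
  exact forwardEuler_DG_ES_like_systems_general hU hω hωsum (Fin.ne_of_val_ne (by lia))
    (fun _ _ _ => Set.mem_univ _) (Set.mem_univ _) (Set.mem_univ _) hES1 hESN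
end
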